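/- arXiv:1610.05617 — 3 statements merged into one kernel-verified Lean document; each statement's English description precedes it below -/
import Mathlib

section
/- Under the generic-association setup described in the context, suppose the Gaussian-approximation hypothesis |P((I−μ)/σ ≤ x) − Ψ(x)| ≤ Ξ·c(x) holds for all x ∈ ℝ. For γ ∈ (0,1) define the outage capacity C_o(γ) = sup{τ ≥ 0 : P(log(1+SINR) < τ) ≤ γ}, with the supremum taken in [0,∞] and sup ∅ = 0. Then C_o(γ) ≤ sup{τ ≥ 0 : 1 − E[V⁺(H,τ)] ≤ γ} and C_o(γ) ≥ sup{τ ≥ 0 : 1 − E[V⁻(H,τ)] ≤ γ}. -/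
open MeasureTheory ProbabilityTheory
open scoped ProbabilityTheory ENNReal

/-- The standard normal cumulative distribution function. -/
noncomputable def stdNormalCDF (x : ℝ) : ℝ :=
  (Real.sqrt (2 * Real.pi))⁻¹ * ∫ t in Set.Iic x, Real.exp (-(t ^ 2) / 2)

/-- The Berry–Esseen multiplicative function `c(x) = min{0.4785, 31.935/(1+|x|³)}`. -/
noncomputable def berryC (x : ℝ) : ℝ := min 0.4785 (31.935 / (1 + |x| ^ 3))


lemma stdNormalCDF_mono : Monotone stdNormalCDF := by
  intro a b hab
  unfold stdNormalCDF
  have hint : Integrable (fun t : ℝ => Real.exp (-(t ^ 2) / 2)) := by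
    have := integrable_exp_neg_mul_sq (b := 1 / 2) (by norm_num)
    refine this.congr (Filter.Eventually.of_forall fun t => ?_)
    simp only
    congr 1
    ring
  refine mul_le_mul_of_nonneg_left ?_ (by positivity)
  exact setIntegral_mono_set hint.integrableOn
    (Filter.Eventually.of_forall fun t => (Real.exp_pos _).le)
    (Filter.Eventually.of_forall (Set.Iic_subset_Iic.2 hab))

lemma berryC_meas : Measurable berryC := by
  unfold berryC
  fun_prop

lemma cdf_indep {Ω : Type*} [MeasureSpace Ω] [IsProbabilityMeasure (ℙ : Measure Ω)]
    (H J : Ω → ℝ) (hH : Measurable H) (hJ : Measurable J) (hind : IndepFun H J ℙ)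
    (z : ℝ → ℝ) (hz : Measurable z) :
    (ℙ {ω | J ω ≤ z (H ω)}).toReal = ∫ ω, (ℙ {ω' | J ω' ≤ z (H ω)}).toReal := by
  have hS : MeasurableSet {p : ℝ × ℝ | p.2 ≤ z p.1} :=
    measurableSet_le measurable_snd (hz.comp measurable_fst)
  have hmm : Measurable fun x : ℝ => (ℙ : Measure Ω) {ω' | J ω' ≤ x} := by
    apply Monotone.measurable
    intro a b hab
    exact measure_mono fun ω (h : J ω ≤ a) => h.trans hab
  have h1 := (indepFun_iff_map_prod_eq_prod_map_map hH.aemeasurable hJ.aemeasurable).1 hind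
  have : IsProbabilityMeasure ((ℙ : Measure Ω).map J) := Measure.isProbabilityMeasure_map hJ.aemeasurable
  have h2 : (ℙ {ω | J ω ≤ z (H ω)}) = ∫⁻ ω, ℙ {ω' | J ω' ≤ z (H ω)} := by
    have e : (ℙ {ω | J ω ≤ z (H ω)})
        = (ℙ : Measure Ω).map (fun ω => (H ω, J ω)) {p : ℝ × ℝ | p.2 ≤ z p.1} := by
      rw [Measure.map_apply (hH.prodMk hJ) hS]; rfl
    rw [e, h1, Measure.prod_apply hS, lintegral_map (measurable_measure_prodMk_left hS) hH]
    congr 1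
    ext ω
    rw [Measure.map_apply hJ (measurable_prodMk_left hS)]
    rfl
  rw [h2]
  exact (integral_toReal ((hmm.comp (hz.comp hH)).aemeasurable)
    (Filter.Eventually.of_forall fun ω => measure_lt_top _ _)).symm

/-- Theorem 4: bounds on the outage capacity `C_o(γ)` under the generic association
policy, assuming the Gaussian approximation bound for the interference `I`.
Suprema are taken in `[0,∞]` (i.e. `ℝ≥0∞`) with `sup ∅ = 0`. -/
theorem outage_capacity_bounds_generic
    {Ω : Type*} [MeasureSpace Ω] [IsProbabilityMeasure (ℙ : Measure Ω)]
    (H I : Ω → ℝ) (hHmeas : Measurable H) (hImeas : Measurable I)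
    (hindep : IndepFun H I ℙ)
    (hHnn : ∀ ω, 0 ≤ H ω) (hInn : ∀ ω, 0 ≤ I ω)
    (hI1 : Integrable I ℙ) (hI2 : Integrable (fun ω => (I ω) ^ 2) ℙ)
    (μ σ : ℝ) (hμ : μ = ∫ ω, I ω) (hσ : σ ^ 2 = ∫ ω, (I ω - μ) ^ 2) (hσpos : 0 < σ)
    (P g N₀ PG Ξ : ℝ) (hP : 0 < P) (hg : 0 < g) (hN₀ : 0 ≤ N₀) (hPG : 1 ≤ PG)
    (hΞ : 0 ≤ Ξ)
    (hpos : ∀ᵐ ω ∂(ℙ : Measure Ω), 0 < N₀ + I ω / PG)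
    (hGauss : ∀ x : ℝ,
      |(ℙ {ω | (I ω - μ) / σ ≤ x}).toReal - stdNormalCDF x| ≤ Ξ * berryC x)
    (γ : ℝ) (hγ : γ ∈ Set.Ioo (0 : ℝ) 1)
    (ζ Vp Vm : ℝ → ℝ → ℝ)
    (hζ : ∀ h τ, ζ h τ = (P * (h * g / (Real.exp τ - 1) - N₀ / P) * PG - μ) / σ)
    (hVp : ∀ h τ, Vp h τ =
      if (Real.exp τ - 1) * N₀ / (P * g) ≤ h then
        min 1 (stdNormalCDF (ζ h τ) + Ξ * berryC (ζ h τ)) else 0)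
    (hVm : ∀ h τ, Vm h τ =
      if (Real.exp τ - 1) * N₀ / (P * g) ≤ h then
        max 0 (stdNormalCDF (ζ h τ) - Ξ * berryC (ζ h τ)) else 0)
    (Co : ℝ≥0∞)
    (hCo : Co = sSup (ENNReal.ofReal '' {τ : ℝ | 0 ≤ τ ∧
      (ℙ {ω | Real.log (1 + P * H ω * g / (N₀ + I ω / PG)) < τ}).toReal ≤ γ})) :
    Co ≤ sSup (ENNReal.ofReal '' {τ : ℝ | 0 ≤ τ ∧ 1 - (∫ ω, Vp (H ω) τ) ≤ γ}) ∧
      sSup (ENNReal.ofReal '' {τ : ℝ | 0 ≤ τ ∧ 1 - (∫ ω, Vm (H ω) τ) ≤ γ}) ≤ Co := by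
  have hPG0 : 0 < PG := by linarith
  have hJ : Measurable fun ω => (I ω - μ) / σ := by fun_prop
  have hJind : IndepFun H (fun ω => (I ω - μ) / σ) ℙ :=
    hindep.comp (φ := id) (ψ := fun x => (x - μ) / σ) measurable_id (by fun_prop)
  have hzm : ∀ τ, Measurable fun h => ζ h τ := by
    intro τ
    simp only [hζ]
    fun_prop
  have hΨ : Measurable stdNormalCDF := stdNormalCDF_mono.measurable
  have hc := berryC_meas
  have hle1 : ∀ x, (ℙ {ω' | (I ω' - μ) / σ ≤ x}).toReal ≤ 1 := fun x =>
    measureReal_le_one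
  have hGm : Measurable fun x : ℝ => (ℙ {ω' | (I ω' - μ) / σ ≤ x}).toReal := by
    apply Measurable.ennreal_toReal
    apply Monotone.measurable
    intro a b hab
    exact measure_mono fun ω (h : (I ω - μ) / σ ≤ a) => h.trans hab
  have hbd : ∀ f : ℝ → ℝ, Measurable f → (∀ h, 0 ≤ f h) → (∀ h, f h ≤ 1) →
      Integrable (fun ω => f (H ω)) ℙ := by
    intro f hf h0 h1
    refine Integrable.of_bound (hf.comp hHmeas).aestronglyMeasurable 1
      (Filter.Eventually.of_forall fun ω => ?_)
    rw [Real.norm_eq_abs, abs_of_nonneg (h0 _)]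
    exact h1 _
  have key : ∀ τ, 0 < τ → (ℙ {ω | Real.log (1 + P * H ω * g / (N₀ + I ω / PG)) < τ}).toReal
      = 1 - ∫ ω, (ℙ {ω' | (I ω' - μ) / σ ≤ ζ (H ω) τ}).toReal := by
    intro τ hτ
    have he : 0 < Real.exp τ - 1 := by
      have := Real.add_one_lt_exp hτ.ne'
      linarith
    rw [← cdf_indep H _ hHmeas hJ hJind (fun h => ζ h τ) (hzm τ)]
    have hms : MeasurableSet {ω | (I ω - μ) / σ ≤ ζ (H ω) τ} :=
      measurableSet_le hJ ((hzm τ).comp hHmeas)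
    have hcm := probReal_compl_eq_one_sub (μ := (ℙ : Measure Ω)) hms
    simp only [Measure.real] at hcm
    rw [← hcm]
    congr 1
    apply measure_congr
    filter_upwards [hpos] with ω hω
    apply propext
    change Real.log (1 + P * H ω * g / (N₀ + I ω / PG)) < τ ↔ ¬ ((I ω - μ) / σ ≤ ζ (H ω) τ)
    have hs : 0 ≤ P * H ω * g / (N₀ + I ω / PG) :=
      div_nonneg (mul_nonneg (mul_nonneg hP.le (hHnn ω)) hg.le) hω.le
    rw [Real.log_lt_iff_lt_exp (by linarith), not_le, hζ, div_lt_div_iff_of_pos_right hσpos,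
      sub_lt_sub_iff_right]
    rw [← lt_sub_iff_add_lt', div_lt_iff₀ hω]
    have e1 : P * (H ω * g / (Real.exp τ - 1) - N₀ / P) * PG
      = (P * H ω * g / (Real.exp τ - 1) - N₀) * PG := by
      field_simp
    rw [e1, ← lt_div_iff₀ hPG0, sub_lt_iff_lt_add', div_lt_iff₀ he, mul_comm (Real.exp τ - 1)]
  have hup : ∀ τ, 0 < τ → ∀ h, (ℙ {ω' | (I ω' - μ) / σ ≤ ζ h τ}).toReal ≤ Vp h τ := by
    intro τ hτ h
    have he : 0 < Real.exp τ - 1 := by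
      have := Real.add_one_lt_exp hτ.ne'
      linarith
    rw [hVp]
    split_ifs with hh
    · refine le_min (hle1 _) ?_
      have := (abs_le.1 (hGauss (ζ h τ))).2
      linarith
    · have : {ω' | (I ω' - μ) / σ ≤ ζ h τ} = ∅ := by
        ext ω
        simp only [Set.mem_setOf_eq, Set.mem_empty_iff_false, iff_false, not_le]
        rw [hζ, div_lt_div_iff_of_pos_right hσpos, sub_lt_sub_iff_right]
        refine lt_of_lt_of_le ?_ (hInn ω)
        have h1 : h * (P * g) < (Real.exp τ - 1) * N₀ := by
          rw [← lt_div_iff₀ (by positivity)]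
          exact not_le.1 hh
        refine mul_neg_of_neg_of_pos (mul_neg_of_pos_of_neg hP ?_) hPG0
        rw [sub_neg, div_lt_div_iff₀ he hP]
        linarith
      rw [this]; simp
  have hlo : ∀ τ h, Vm h τ ≤ (ℙ {ω' | (I ω' - μ) / σ ≤ ζ h τ}).toReal := by
    intro τ h
    rw [hVm]
    split_ifs with hh
    · refine max_le ENNReal.toReal_nonneg ?_
      have := (abs_le.1 (hGauss (ζ h τ))).1
      linarith
    · exact ENNReal.toReal_nonneg
  have hVp1 : ∀ τ h, Vp h τ ≤ 1 := by
    intro τ h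
    rw [hVp]
    split_ifs
    · exact min_le_left _ _
    · exact zero_le_one
  have hVm0 : ∀ τ h, 0 ≤ Vm h τ := by
    intro τ h
    rw [hVm]
    split_ifs
    · exact le_max_left _ _
    · exact le_rfl
  have hms : ∀ τ, MeasurableSet {h : ℝ | (Real.exp τ - 1) * N₀ / (P * g) ≤ h} :=
    fun τ => measurableSet_Ici
  have hVpm : ∀ τ, Measurable fun h => Vp h τ := by
    intro τ
    simp only [hVp]
    exact Measurable.ite (hms τ) (measurable_const.min ((hΨ.comp (hzm τ)).add
      ((hc.comp (hzm τ)).const_mul Ξ))) measurable_const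
  have hVmm : ∀ τ, Measurable fun h => Vm h τ := by
    intro τ
    simp only [hVm]
    exact Measurable.ite (hms τ) (measurable_const.max ((hΨ.comp (hzm τ)).sub
      ((hc.comp (hzm τ)).const_mul Ξ))) measurable_const
  have hGi : ∀ τ, Integrable (fun ω => (ℙ {ω' | (I ω' - μ) / σ ≤ ζ (H ω) τ}).toReal) ℙ :=
    fun τ => hbd (fun h => (ℙ {ω' | (I ω' - μ) / σ ≤ ζ h τ}).toReal)
      (hGm.comp (hzm τ)) (fun _ => ENNReal.toReal_nonneg) (fun _ => hle1 _)
  rw [hCo]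
  constructor
  · apply sSup_le
    rintro _ ⟨τ, ⟨h0, h1⟩, rfl⟩
    rcases h0.eq_or_lt with rfl | hτ
    · simp
    · refine le_sSup ⟨τ, ⟨h0, ?_⟩, rfl⟩
      rw [key τ hτ] at h1
      have := integral_mono (hGi τ) (hbd (fun h => Vp h τ) (hVpm τ)
        (fun h => ENNReal.toReal_nonneg.trans (hup τ hτ h)) (hVp1 τ)) (fun ω => hup τ hτ (H ω))
      linarith
  · apply sSup_le
    rintro _ ⟨τ, ⟨h0, h1⟩, rfl⟩
    rcases h0.eq_or_lt with rfl | hτ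
    · simp
    · refine le_sSup ⟨τ, ⟨h0, ?_⟩, rfl⟩
      rw [key τ hτ]
      have := integral_mono (hbd (fun h => Vm h τ) (hVmm τ)
        (hVm0 τ) (fun h => (hlo τ h).trans (hle1 _))) (hGi τ) (fun ω => hlo τ (H ω))
      linarith
end

section
/- In the BARSS nearest-distance setup described in the context, fix k. Then for every r ≥ 0, P( R_k ≤ r and β_i·P_i·G_i(R_i) ≤ β_k·P_k·G_k(R_k) for all i ≠ k ) = ∫₀^r ( ∏_{i≠k} exp(−m_i(Q_i^{(k)}(u))) )·f_{R_k}(u) du. Consequently, the conditional distribution of the connection distance R* = R_k given the association event {A* = k} has density f_k(u) = (1/p_k*)·( ∏_{i≠k} exp(−m_i(Q_i^{(k)}(u))) )·f_{R_k}(u), where p_k* is the tier-k association probability. -/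
open MeasureTheory ProbabilityTheory
open scoped ProbabilityTheory ENNReal

lemma barss_key (G : ℝ → ℝ)
    (hc : ContinuousOn G (Set.Ici 0))
    (ha : ∀ x y : ℝ, 0 ≤ x → x ≤ y → G y ≤ G x)
    (hl : Filter.Tendsto G Filter.atTop (nhds 0))
    (Ginv : ℝ → ℝ)
    (h1 : ∀ y : ℝ, 0 < y → y ≤ G 0 → Ginv y = sInf {x : ℝ | 0 ≤ x ∧ G x = y})
    (h2 : ∀ y : ℝ, G 0 < y → Ginv y = 0) (y : ℝ) (hy : 0 < y) :
    0 ≤ Ginv y ∧ ∀ x, 0 ≤ x → (G x ≤ y ↔ Ginv y ≤ x) := by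
  rcases lt_or_ge (G 0) y with h | h
  · rw [h2 y h]
    exact ⟨le_rfl, fun x hx => ⟨fun _ => hx, fun _ => (ha 0 x le_rfl hx).trans h.le⟩⟩
  · rw [h1 y hy h]
    set S := {x : ℝ | 0 ≤ x ∧ G x = y} with hS
    have hbdd : BddBelow S := ⟨0, fun x hx => hx.1⟩
    have ivt : ∀ x, 0 ≤ x → G x ≤ y → ∃ z ∈ S, z ≤ x := by
      intro x hx hxy
      have := intermediate_value_Icc' hx (hc.mono Set.Icc_subset_Ici_self)
      obtain ⟨z, hz, hzy⟩ := this ⟨hxy, h⟩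
      exact ⟨z, ⟨hz.1, hzy⟩, hz.2⟩
    have hne : S.Nonempty := by
      obtain ⟨x, hx1, hx2⟩ := ((hl.eventually (gt_mem_nhds hy)).and
        (Filter.eventually_ge_atTop 0)).exists
      obtain ⟨z, hz, _⟩ := ivt x hx2 hx1.le
      exact ⟨z, hz⟩
    have hcl : IsClosed S := by
      have := hc.preimage_isClosed_of_isClosed isClosed_Ici (isClosed_singleton (x := y))
      exact this
    have hmem : sInf S ∈ S := hcl.csInf_mem hne hbdd
    refine ⟨hmem.1, fun x hx => ⟨fun hxy => ?_, fun hsx => ?_⟩⟩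
    · obtain ⟨z, hz, hzx⟩ := ivt x hx hxy
      exact (csInf_le hbdd hz).trans hzx
    · exact (ha _ x hmem.1 hsx).trans hmem.2.le

lemma barss_law {Ω : Type*} [MeasurableSpace Ω] (μ : Measure Ω) [IsProbabilityMeasure μ]
    (X : Ω → ℝ) (hX : Measurable X) (hXn : ∀ ω, 0 ≤ X ω) (m m' : ℝ → ℝ)
    (hmono : ∀ x y : ℝ, 0 ≤ x → x ≤ y → m x ≤ m y)
    (hm0 : m 0 = 0) (hmtop : Filter.Tendsto m Filter.atTop Filter.atTop)
    (hs : ∀ r : ℝ, 0 ≤ r → μ {ω | r ≤ X ω} = ENNReal.ofReal (Real.exp (-(m r))))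
    (hd : ∀ u : ℝ, 0 ≤ u → HasDerivAt m (m' u) u) :
    (∀ u, 0 < u → 0 ≤ m' u) ∧
    μ.map X = (volume.restrict (Set.Ioi (0:ℝ))).withDensity
      (fun u => ENNReal.ofReal (m' u * Real.exp (-(m u)))) := by
  have hnn : ∀ u, 0 < u → 0 ≤ m' u := by
    intro u hu
    have h1 : MonotoneOn m (Set.Ioi 0) := fun x hx y hy hxy => hmono x y (le_of_lt hx) hxy
    have h2 := h1.derivWithin_nonneg (x := u)
    rwa [derivWithin_of_isOpen isOpen_Ioi hu, (hd u hu.le).deriv] at h2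
  refine ⟨hnn, ?_⟩
  have : IsProbabilityMeasure (μ.map X) := Measure.isProbabilityMeasure_map hX.aemeasurable
  have key : ∀ a : ℝ, 0 ≤ a → ∫⁻ u in Set.Ioi a, ENNReal.ofReal (m' u * Real.exp (-(m u)))
      = ENNReal.ofReal (Real.exp (-(m a))) := by
    intro a ha
    have hder : ∀ u ∈ Set.Ici a, HasDerivAt (fun u => - Real.exp (-(m u)))
        (m' u * Real.exp (-(m u))) u := by
      intro u hu
      have : HasDerivAt (fun u => - Real.exp (-(m u))) (-(Real.exp (-(m u)) * (-(m' u)))) u :=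
        ((hd u (ha.trans hu)).fun_neg.exp).fun_neg
      exact this.congr_deriv (by ring)
    have hpos : ∀ u ∈ Set.Ioi a, 0 ≤ m' u * Real.exp (-(m u)) := fun u hu =>
      mul_nonneg (hnn u (lt_of_le_of_lt ha hu)) (Real.exp_pos _).le
    have hlim : Filter.Tendsto (fun u => - Real.exp (-(m u))) Filter.atTop (nhds 0) := by
      have := (Real.tendsto_exp_neg_atTop_nhds_zero.comp hmtop).neg
      simpa using this
    have hint := integrableOn_Ioi_deriv_of_nonneg' hder hpos hlim
    have hI := integral_Ioi_of_hasDerivAt_of_nonneg' hder hpos hlim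
    rw [← ofReal_integral_eq_lintegral_ofReal hint, hI]
    · simp
    · exact (ae_restrict_iff' measurableSet_Ioi).2 (Filter.Eventually.of_forall hpos)
  have hfin : IsFiniteMeasure ((volume.restrict (Set.Ioi (0:ℝ))).withDensity
      (fun u => ENNReal.ofReal (m' u * Real.exp (-(m u))))) :=
    isFiniteMeasure_withDensity (by rw [key 0 le_rfl]; exact ENNReal.ofReal_ne_top)
  refine Measure.ext_of_Ici _ _ fun a => ?_
  rw [Measure.map_apply hX measurableSet_Ici, withDensity_apply _ measurableSet_Ici,
    Measure.restrict_restrict measurableSet_Ici]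
  rcases lt_or_ge a 0 with h | h
  · have e1 : Set.Ici a ∩ Set.Ioi 0 = Set.Ioi 0 := by
      apply Set.inter_eq_right.2; intro x hx; exact h.le.trans (le_of_lt hx)
    have e2 : X ⁻¹' Set.Ici a = {ω | 0 ≤ X ω} := by
      ext ω; simp [hXn ω, h.le.trans (hXn ω)]
    rw [e1, e2, hs 0 le_rfl, key 0 le_rfl]
  · have e1 : (Set.Ici a ∩ Set.Ioi 0 : Set ℝ) =ᵐ[volume] Set.Ioi a := by
      have : (Set.Ici a ∩ Set.Ioi 0 : Set ℝ) =ᵐ[volume] (Set.Ioi a ∩ Set.Ioi 0 : Set ℝ) :=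
        Ioi_ae_eq_Ici.symm.inter (Filter.EventuallyEq.refl _ _)
      refine this.trans (Filter.EventuallyEq.of_eq ?_)
      apply Set.inter_eq_left.2; intro x hx; exact lt_of_le_of_lt h hx
    rw [Measure.restrict_congr_set e1, key a h]
    exact hs a h

/-- Lemma 7: the joint law of the tier-`k` nearest distance and the BARSS
association event, and the resulting conditional density of the connection
distance given association with tier `k` (non-homogeneous deployments). -/
theorem barss_conditional_connection_distance
    {Ω : Type*} [MeasureSpace Ω] [IsProbabilityMeasure (ℙ : Measure Ω)]
    (K : ℕ) (hK : 2 ≤ K) (k : Fin K)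
    (β P : Fin K → ℝ) (hβ : ∀ i, 0 < β i) (hP : ∀ i, 0 < P i)
    (G : Fin K → ℝ → ℝ)
    (hGcont : ∀ i, ContinuousOn (G i) (Set.Ici 0))
    (hGanti : ∀ i, ∀ x y : ℝ, 0 ≤ x → x ≤ y → G i y ≤ G i x)
    (hGpos : ∀ i, ∀ x : ℝ, 0 ≤ x → 0 < G i x)
    (hGlim : ∀ i, Filter.Tendsto (G i) Filter.atTop (nhds 0))
    (Ginv : Fin K → ℝ → ℝ)
    (hGinv1 : ∀ i, ∀ y : ℝ, 0 < y → y ≤ G i 0 →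
      Ginv i y = sInf {x : ℝ | 0 ≤ x ∧ G i x = y})
    (hGinv2 : ∀ i, ∀ y : ℝ, G i 0 < y → Ginv i y = 0)
    (Q : Fin K → ℝ → ℝ)
    (hQ : ∀ i u, Q i u = Ginv i (β k * P k / (β i * P i) * G k u))
    (R : Fin K → Ω → ℝ)
    (hRmeas : ∀ i, Measurable (R i)) (hRnn : ∀ i ω, 0 ≤ R i ω)
    (hRindep : iIndepFun R ℙ)
    (m : Fin K → ℝ → ℝ)
    (hmcont : ∀ i, ContinuousOn (m i) (Set.Ici 0))
    (hmmono : ∀ i, ∀ x y : ℝ, 0 ≤ x → x ≤ y → m i x ≤ m i y)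
    (hmnn : ∀ i, ∀ x : ℝ, 0 ≤ x → 0 ≤ m i x)
    (hm0 : ∀ i, m i 0 = 0)
    (hmtop : ∀ i, Filter.Tendsto (m i) Filter.atTop Filter.atTop)
    (hsurv : ∀ i, ∀ r : ℝ, 0 ≤ r →
      ℙ {ω | r ≤ R i ω} = ENNReal.ofReal (Real.exp (-(m i r))))
    (mk' : ℝ → ℝ) (hmk'cont : ContinuousOn mk' (Set.Ici 0))
    (hmderiv : ∀ u : ℝ, 0 ≤ u → HasDerivAt (m k) (mk' u) u)
    (pk : ℝ)
    (hpk : pk = (ℙ {ω | ∀ i, i ≠ k →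
      β i * P i * G i (R i ω) ≤ β k * P k * G k (R k ω)}).toReal)
    (fk : ℝ → ℝ)
    (hfk : ∀ u : ℝ, fk u = (1 / pk) *
      ((∏ i ∈ Finset.univ.erase k, Real.exp (-(m i (Q i u)))) *
        (mk' u * Real.exp (-(m k u))))) :
    (∀ r : ℝ, 0 ≤ r →
      (ℙ {ω | R k ω ≤ r ∧ ∀ i, i ≠ k →
          β i * P i * G i (R i ω) ≤ β k * P k * G k (R k ω)}).toReal =
        ∫ u in Set.Ioc (0 : ℝ) r,
          (∏ i ∈ Finset.univ.erase k, Real.exp (-(m i (Q i u)))) *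
            (mk' u * Real.exp (-(m k u)))) ∧
    (∀ r : ℝ, 0 ≤ r →
      (ℙ {ω | R k ω ≤ r ∧ ∀ i, i ≠ k →
          β i * P i * G i (R i ω) ≤ β k * P k * G k (R k ω)}).toReal =
        ∫ u in Set.Ioc (0 : ℝ) r, pk * fk u) := by
  obtain ⟨hnn, hlaw⟩ := barss_law ℙ (R k) (hRmeas k) (hRnn k) (m k) mk' (hmmono k) (hm0 k)
    (hmtop k) (hsurv k) hmderiv
  have hc : ∀ i, 0 < β i * P i := fun i => mul_pos (hβ i) (hP i)
  -- continuous extension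
  have hHc : ∀ i, Continuous (fun x => G i (max x 0)) := fun i =>
    (hGcont i).comp_continuous (by fun_prop) (fun x => Set.mem_Ici.2 (le_max_right _ _))
  have hHR : ∀ i ω, G i (max (R i ω) 0) = G i (R i ω) := fun i ω => by
    rw [max_eq_left (hRnn i ω)]
  have hiff : ∀ i u x, 0 ≤ u → 0 ≤ x →
      (β i * P i * G i x ≤ β k * P k * G k u ↔ Q i u ≤ x) := by
    intro i u x hu hx
    have hy : 0 < β k * P k / (β i * P i) * G k u :=
      mul_pos (div_pos (hc k) (hc i)) (hGpos k u hu)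
    rw [hQ, ← (barss_key (G i) (hGcont i) (hGanti i) (hGlim i) (Ginv i) (hGinv1 i) (hGinv2 i)
      _ hy).2 x hx, div_mul_eq_mul_div, le_div_iff₀ (hc i), mul_comm (G i x)]
  have hQnn : ∀ i u, 0 ≤ u → 0 ≤ Q i u := by
    intro i u hu
    rw [hQ]
    exact (barss_key (G i) (hGcont i) (hGanti i) (hGlim i) (Ginv i) (hGinv1 i) (hGinv2 i)
      _ (mul_pos (div_pos (hc k) (hc i)) (hGpos k u hu))).1
  let Y : Ω → (↥(Finset.univ.erase k) → ℝ) := fun ω i => R i ω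
  have hYm : Measurable Y := measurable_pi_lambda _ fun i => hRmeas i
  have hind : IndepFun (R k) Y ℙ := by
    have h := hRindep.indepFun_finset {k} (Finset.univ.erase k) (by simp) hRmeas
    exact h.comp (φ := fun f : ↥({k} : Finset (Fin K)) → ℝ => f ⟨k, by simp⟩)
      (ψ := id) (measurable_pi_apply (⟨k, by simp⟩ : ↥({k} : Finset (Fin K)))) measurable_id
  have hYp : IsProbabilityMeasure (Measure.map Y ℙ) :=
    Measure.isProbabilityMeasure_map hYm.aemeasurable
  have hprod := (indepFun_iff_map_prod_eq_prod_map_map (hRmeas k).aemeasurable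
    hYm.aemeasurable).1 hind
  let T : Set (ℝ × (↥(Finset.univ.erase k) → ℝ)) :=
    {p | ∀ i : ↥(Finset.univ.erase k),
      β i * P i * G i (max (p.2 i) 0) ≤ β k * P k * G k (max p.1 0)}
  have hT : MeasurableSet T := by
    have : T = ⋂ i : ↥(Finset.univ.erase k),
      {p | β i * P i * G i (max (p.2 i) 0) ≤ β k * P k * G k (max p.1 0)} := by
      ext p; simp [T]
    rw [this]
    refine MeasurableSet.iInter fun i => measurableSet_le ?_ ?_
    · exact ((hHc i).measurable.comp ((measurable_pi_apply i).comp measurable_snd)).const_mul _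
    · exact ((hHc k).measurable.comp measurable_fst).const_mul _
  let g : ℝ → ℝ≥0∞ := fun u => Measure.map Y ℙ (Prod.mk u ⁻¹' T)
  have hgm : Measurable g := measurable_measure_prodMk_left hT
  have hg : ∀ u, 0 ≤ u → g u =
      ENNReal.ofReal (∏ i ∈ Finset.univ.erase k, Real.exp (-(m i (Q i u)))) := by
    intro u hu
    have h1 : g u = ℙ (⋂ i ∈ Finset.univ.erase k, R i ⁻¹' Set.Ici (Q i u)) := by
      simp only [g]
      rw [Measure.map_apply hYm (measurable_prodMk_left hT)]
      congr 1
      ext ω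
      simp only [T, Y, Set.mem_preimage, Set.mem_setOf_eq, Set.mem_iInter, Set.mem_Ici,
        max_eq_left hu, hHR, Subtype.forall]
      exact forall₂_congr fun i _ => hiff i u _ hu (hRnn i ω)
    rw [h1, hRindep.measure_inter_preimage_eq_mul _ (fun i _ => measurableSet_Ici),
      ENNReal.ofReal_prod_of_nonneg (fun i _ => (Real.exp_pos _).le)]
    exact Finset.prod_congr rfl fun i _ => hsurv i _ (hQnn i u hu)
  have hdm : AEMeasurable (fun u => ENNReal.ofReal (mk' u * Real.exp (-(m k u))))
      (volume.restrict (Set.Ioi (0:ℝ))) := by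
    refine AEMeasurable.ennreal_ofReal (ContinuousOn.aemeasurable ?_ measurableSet_Ioi)
    exact (hmk'cont.mul (hmcont k).neg.rexp).mono Set.Ioi_subset_Ici_self
  have main : ∀ r : ℝ, 0 ≤ r →
      (ℙ {ω | R k ω ≤ r ∧ ∀ i, i ≠ k →
          β i * P i * G i (R i ω) ≤ β k * P k * G k (R k ω)}).toReal =
        ∫ u in Set.Ioc (0 : ℝ) r,
          (∏ i ∈ Finset.univ.erase k, Real.exp (-(m i (Q i u)))) *
            (mk' u * Real.exp (-(m k u))) := by
    intro r hr
    have hS : {ω | R k ω ≤ r ∧ ∀ i, i ≠ k →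
          β i * P i * G i (R i ω) ≤ β k * P k * G k (R k ω)} =
        (fun ω => (R k ω, Y ω)) ⁻¹' (T ∩ (Prod.fst ⁻¹' Set.Iic r)) := by
      ext ω
      simp only [T, Y, Set.mem_preimage, Set.mem_setOf_eq, Set.mem_inter_iff, Set.mem_Iic, hHR,
        Subtype.forall, Finset.mem_erase, Finset.mem_univ, and_true]
      exact and_comm
    have hTm : MeasurableSet (T ∩ (Prod.fst ⁻¹' Set.Iic r)) :=
      hT.inter (measurable_fst measurableSet_Iic)
    have hsec : ∀ u, Measure.map Y ℙ (Prod.mk u ⁻¹' (T ∩ (Prod.fst ⁻¹' Set.Iic r))) =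
        (Set.Iic r).indicator g u := by
      intro u
      by_cases hu : u ≤ r
      · rw [Set.indicator_of_mem (show u ∈ Set.Iic r from hu)]
        simp only [g]
        congr 1
        ext y; simp [hu]
      · rw [Set.indicator_of_notMem (show u ∉ Set.Iic r from hu)]
        convert measure_empty (μ := Measure.map Y ℙ)
        ext y; simp [hu]
    have hmeas : ℙ {ω | R k ω ≤ r ∧ ∀ i, i ≠ k →
          β i * P i * G i (R i ω) ≤ β k * P k * G k (R k ω)} =
        ∫⁻ u in Set.Ioc (0:ℝ) r, ENNReal.ofReal (mk' u * Real.exp (-(m k u))) * g u := by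
      rw [hS, ← Measure.map_apply ((hRmeas k).prodMk hYm) hTm, hprod, Measure.prod_apply hTm]
      simp_rw [hsec]
      rw [hlaw, lintegral_withDensity_eq_lintegral_mul₀ hdm
        (hgm.indicator measurableSet_Iic).aemeasurable, ← Set.Ioi_inter_Iic, Set.inter_comm,
        ← Measure.restrict_restrict measurableSet_Iic, ← lintegral_indicator measurableSet_Iic]
      refine lintegral_congr fun u => ?_
      by_cases hu : u ∈ Set.Iic r <;> simp [Set.indicator, Pi.mul_apply] 
    rw [hmeas, ← integral_toReal]
    · refine setIntegral_congr_fun measurableSet_Ioc fun u hu => ?_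
      have h0 : 0 ≤ mk' u * Real.exp (-(m k u)) := mul_nonneg (hnn u hu.1) (Real.exp_pos _).le
      rw [hg u hu.1.le, ENNReal.toReal_mul, ENNReal.toReal_ofReal h0,
        ENNReal.toReal_ofReal (Finset.prod_nonneg fun i _ => (Real.exp_pos _).le), mul_comm]
    · exact (hdm.mono_measure (Measure.restrict_mono Set.Ioc_subset_Ioi_self le_rfl)).mul
        hgm.aemeasurable
    · exact Filter.Eventually.of_forall fun u => ENNReal.mul_lt_top ENNReal.ofReal_lt_top
        (measure_lt_top _ _)
  refine ⟨main, fun r hr => ?_⟩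
  by_cases h0 : pk = 0
  · have hz : ℙ {ω | ∀ i, i ≠ k →
      β i * P i * G i (R i ω) ≤ β k * P k * G k (R k ω)} = 0 := by
      rw [h0] at hpk
      exact ((ENNReal.toReal_eq_zero_iff _).1 hpk.symm).resolve_right (measure_ne_top _ _)
    have hz2 : ℙ {ω | R k ω ≤ r ∧ ∀ i, i ≠ k →
      β i * P i * G i (R i ω) ≤ β k * P k * G k (R k ω)} = 0 :=
      measure_mono_null (fun ω hω => hω.2) hz
    rw [hz2]; simp [h0]
  · rw [main r hr]
    refine setIntegral_congr_fun measurableSet_Ioc fun u _ => ?_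
    simp only [hfk]
    field_simp
end

section
/- Under the BARSS mixture setup described in the context, for every τ > 0 the τ-outage probability satisfies 1 − Σ_{k=1}^K p_k* ∫₀^∞ f_k(r)·E[V̂_k⁺(H_k,τ,r)] dr ≤ P(τ-outage) ≤ 1 − Σ_{k=1}^K p_k* ∫₀^∞ f_k(r)·E[V̂_k⁻(H_k,τ,r)] dr. -/
open MeasureTheory ProbabilityTheory
open scoped ProbabilityTheory ENNReal

lemma stdNormalCDF_meas : Measurable stdNormalCDF := stdNormalCDF_mono.measurable

lemma barss_core {Ω : Type*} [MeasurableSpace Ω] (m : Measure Ω) [IsProbabilityMeasure m]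
    (X Y : Ω → ℝ) (hX : Measurable X) (hY : Measurable Y) (hi : IndepFun X Y m)
    (T : Set (ℝ × ℝ)) (hT : MeasurableSet T) (lo up : ℝ → ℝ) (hlo : Measurable lo)
    (hup : Measurable up) (h0 : ∀ h, 0 ≤ lo h) (h1 : ∀ h, up h ≤ 1)
    (hl : ∀ h, lo h ≤ m.real {ω | (h, Y ω) ∈ T})
    (hu : ∀ h, m.real {ω | (h, Y ω) ∈ T} ≤ up h) :
    ∫ ω, lo (X ω) ∂m ≤ m.real {ω | (X ω, Y ω) ∈ T} ∧
    m.real {ω | (X ω, Y ω) ∈ T} ≤ ∫ ω, up (X ω) ∂m := by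
  have := Measure.isProbabilityMeasure_map (μ := m) hX.aemeasurable
  have := Measure.isProbabilityMeasure_map (μ := m) hY.aemeasurable
  have hsec : ∀ h, (m.map Y) (Prod.mk h ⁻¹' T) = m {ω | (h, Y ω) ∈ T} := fun h => by
    rw [Measure.map_apply hY (measurable_prodMk_left hT)]; rfl
  have hqm : Measurable fun h => m {ω | (h, Y ω) ∈ T} := by
    have := measurable_measure_prodMk_left (ν := m.map Y) hT
    simpa only [hsec] using this
  have key : m {ω | (X ω, Y ω) ∈ T} = ∫⁻ ω, m {ω' | (X ω, Y ω') ∈ T} ∂m := by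
    have e := (indepFun_iff_map_prod_eq_prod_map_map hX.aemeasurable hY.aemeasurable).1 hi
    have e2 : m {ω | (X ω, Y ω) ∈ T} = (m.map fun ω => (X ω, Y ω)) T := by
      rw [Measure.map_apply (hX.prodMk hY) hT]; rfl
    rw [e2, e, Measure.prod_apply hT]
    simp only [hsec]
    rw [lintegral_map hqm hX]
  have key2 : m.real {ω | (X ω, Y ω) ∈ T} = ∫ ω, m.real {ω' | (X ω, Y ω') ∈ T} ∂m := by
    simp only [measureReal_def]
    rw [key]
    exact (integral_toReal (hqm.comp hX).aemeasurable
      (Filter.Eventually.of_forall fun ω => measure_lt_top _ _)).symm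
  have hbd : ∀ g : ℝ → ℝ, Measurable g → (∀ h, 0 ≤ g h) → (∀ h, g h ≤ 1) →
      Integrable (fun ω => g (X ω)) m := by
    intro g hg a b
    refine Integrable.of_bound (hg.comp hX).aestronglyMeasurable 1
      (Filter.Eventually.of_forall fun ω => ?_)
    show ‖g (X ω)‖ ≤ 1
    rw [Real.norm_eq_abs, abs_of_nonneg (a _)]
    exact b _
  have iq := hbd (fun h => m.real {ω | (h, Y ω) ∈ T}) hqm.ennreal_toReal
    (fun _ => measureReal_nonneg) (fun _ => measureReal_le_one)
  have il := hbd lo hlo h0 (fun h => (hl h).trans measureReal_le_one)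
  have iu := hbd up hup (fun h => measureReal_nonneg.trans (hu h)) h1
  rw [key2]
  exact ⟨integral_mono il iq fun ω => hl _, integral_mono iq iu fun ω => hu _⟩

lemma barss_iff {p h g n i pg t m s : ℝ} (hp : 0 < p) (hh : 0 ≤ h) (hg : 0 < g)
    (hi : 0 ≤ i) (hpg : 1 ≤ pg) (ht : 0 < t) (hs : 0 < s) (hpos : 0 < n + i / pg) :
    ¬ Real.log (1 + p * h * g / (n + i / pg)) < t ↔
      ((i - m) / s ≤ (p * (h * g / (Real.exp t - 1) - n / p) * pg - m) / s ∧
        (Real.exp t - 1) * n / (p * g) ≤ h) := by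
  have he : 0 < Real.exp t - 1 := by
    have := Real.add_one_lt_exp ht.ne'
    linarith
  have hpg0 : 0 < pg := by linarith
  have hA : 0 < 1 + p * h * g / (n + i / pg) := by positivity
  rw [not_lt, Real.le_log_iff_exp_le hA, div_le_div_iff_of_pos_right hs,
    sub_le_sub_iff_right, ← sub_le_iff_le_add', le_div_iff₀ hpos, div_le_iff₀ (by positivity)]
  have e1 : p * (h * g / (Real.exp t - 1) - n / p) * pg
      = (p * h * g / (Real.exp t - 1) - n) * pg := by field_simp
  rw [e1, ← div_le_iff₀ hpg0, le_sub_iff_add_le, le_div_iff₀ he]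
  have h0 : 0 ≤ (Real.exp t - 1) * (i / pg) := by positivity
  constructor
  · intro H
    constructor <;> nlinarith
  · rintro ⟨H, -⟩
    nlinarith

/-- Theorem 6: bounds on the τ-outage probability under the BARSS association
policy (mixture over tiers and connection distances). -/
theorem barss_outage_probability_bounds
    {Ω : Type*} [MeasureSpace Ω] [IsProbabilityMeasure (ℙ : Measure Ω)]
    (K : ℕ) (hK : 1 ≤ K)
    (P : Fin K → ℝ) (hP : ∀ k, 0 < P k)
    (G : Fin K → ℝ → ℝ) (hGmeas : ∀ k, Measurable (G k))
    (hGpos : ∀ k, ∀ r : ℝ, 0 ≤ r → 0 < G k r)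
    (N₀ PG : ℝ) (hN₀ : 0 ≤ N₀) (hPG : 1 ≤ PG)
    (pstar : Fin K → ℝ) (hpstar : ∀ k, 0 ≤ pstar k) (hpsum : ∑ k, pstar k = 1)
    (f : Fin K → ℝ → ℝ) (hfmeas : ∀ k, Measurable (f k))
    (hfnn : ∀ k r, 0 ≤ f k r) (hfint : ∀ k, ∫ r in Set.Ici (0 : ℝ), f k r = 1)
    (H : Fin K → Ω → ℝ) (hHmeas : ∀ k, Measurable (H k)) (hHnn : ∀ k ω, 0 ≤ H k ω)
    (I : Fin K → ℝ → Ω → ℝ)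
    (hImeas : ∀ k, Measurable (Function.uncurry (I k)))
    (hInn : ∀ k, ∀ r : ℝ, 0 ≤ r → ∀ ω, 0 ≤ I k r ω)
    (hindep : ∀ k, ∀ r : ℝ, 0 ≤ r → IndepFun (H k) (I k r) ℙ)
    (hI1 : ∀ k, ∀ r : ℝ, 0 ≤ r → Integrable (I k r) ℙ)
    (hI2 : ∀ k, ∀ r : ℝ, 0 ≤ r → Integrable (fun ω => (I k r ω) ^ 2) ℙ)
    (μ σ Ξ : Fin K → ℝ → ℝ)
    (hμmeas : ∀ k, Measurable (μ k)) (hσmeas : ∀ k, Measurable (σ k))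
    (hΞmeas : ∀ k, Measurable (Ξ k))
    (hμ : ∀ k, ∀ r : ℝ, 0 ≤ r → μ k r = ∫ ω, I k r ω)
    (hσ : ∀ k, ∀ r : ℝ, 0 ≤ r → (σ k r) ^ 2 = ∫ ω, (I k r ω - μ k r) ^ 2)
    (hσpos : ∀ k, ∀ r : ℝ, 0 ≤ r → 0 < σ k r)
    (hΞnn : ∀ k, ∀ r : ℝ, 0 ≤ r → 0 ≤ Ξ k r)
    (hpos : ∀ k, ∀ r : ℝ, 0 ≤ r → ∀ᵐ ω ∂(ℙ : Measure Ω), 0 < N₀ + I k r ω / PG)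
    (hGauss : ∀ k, ∀ r : ℝ, 0 ≤ r → ∀ x : ℝ,
      |(ℙ {ω | (I k r ω - μ k r) / σ k r ≤ x}).toReal - stdNormalCDF x| ≤
        Ξ k r * berryC x)
    (ζ Vp Vm : Fin K → ℝ → ℝ → ℝ → ℝ)
    (hζ : ∀ k h τ r, ζ k h τ r =
      (P k * (h * G k r / (Real.exp τ - 1) - N₀ / P k) * PG - μ k r) / σ k r)
    (hVp : ∀ k h τ r, Vp k h τ r =
      if (Real.exp τ - 1) * N₀ / (P k * G k r) ≤ h then
        min 1 (stdNormalCDF (ζ k h τ r) + Ξ k r * berryC (ζ k h τ r)) else 0)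
    (hVm : ∀ k h τ r, Vm k h τ r =
      if (Real.exp τ - 1) * N₀ / (P k * G k r) ≤ h then
        max 0 (stdNormalCDF (ζ k h τ r) - Ξ k r * berryC (ζ k h τ r)) else 0)
    (τ : ℝ) (hτ : 0 < τ) :
    1 - (∑ k, pstar k * ∫ r in Set.Ici (0 : ℝ), f k r * ∫ ω, Vp k (H k ω) τ r) ≤
        (∑ k, pstar k * ∫ r in Set.Ici (0 : ℝ),
          (ℙ {ω | Real.log (1 + P k * H k ω * G k r / (N₀ + I k r ω / PG)) < τ}).toReal
            * f k r) ∧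
      (∑ k, pstar k * ∫ r in Set.Ici (0 : ℝ),
          (ℙ {ω | Real.log (1 + P k * H k ω * G k r / (N₀ + I k r ω / PG)) < τ}).toReal
            * f k r) ≤
        1 - (∑ k, pstar k * ∫ r in Set.Ici (0 : ℝ), f k r * ∫ ω, Vm k (H k ω) τ r) := by
  have main : ∀ k,
      1 - (∫ r in Set.Ici (0 : ℝ), f k r * ∫ ω, Vp k (H k ω) τ r) ≤
        (∫ r in Set.Ici (0 : ℝ),
          (ℙ {ω | Real.log (1 + P k * H k ω * G k r / (N₀ + I k r ω / PG)) < τ}).toReal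
            * f k r) ∧
      (∫ r in Set.Ici (0 : ℝ),
          (ℙ {ω | Real.log (1 + P k * H k ω * G k r / (N₀ + I k r ω / PG)) < τ}).toReal
            * f k r) ≤
        1 - (∫ r in Set.Ici (0 : ℝ), f k r * ∫ ω, Vm k (H k ω) τ r) := by
    intro k
    have m1 := hGmeas k
    have m2 := hfmeas k
    have m3 := hHmeas k
    have m4 := hImeas k
    have m5 := hμmeas k
    have m6 := hσmeas k
    have m7 := hΞmeas k
    -- joint measurability
    have mζ : Measurable fun x : ℝ × ℝ => ζ k x.2 τ x.1 := by
      simp only [hζ]; fun_prop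
    have mS : MeasurableSet {x : ℝ × ℝ | (Real.exp τ - 1) * N₀ / (P k * G k x.1) ≤ x.2} :=
      measurableSet_le (by fun_prop) (by fun_prop)
    have mΨ := stdNormalCDF_meas.comp mζ
    have mc := berryC_meas.comp mζ
    have mΞ : Measurable fun x : ℝ × ℝ => Ξ k x.1 := m7.comp measurable_fst
    have mVp : Measurable fun x : ℝ × ℝ => Vp k x.2 τ x.1 := by
      simp only [hVp]
      exact Measurable.ite mS (measurable_const.min (mΨ.add (mΞ.mul mc))) measurable_const
    have mVm : Measurable fun x : ℝ × ℝ => Vm k x.2 τ x.1 := by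
      simp only [hVm]
      exact Measurable.ite mS (measurable_const.max (mΨ.sub (mΞ.mul mc))) measurable_const
    have mO : MeasurableSet {x : ℝ × Ω |
        Real.log (1 + P k * H k x.2 * G k x.1 / (N₀ + I k x.1 x.2 / PG)) < τ} := by
      have m4' : Measurable fun x : ℝ × Ω => I k x.1 x.2 := m4
      exact measurableSet_lt (Real.measurable_log.comp (by fun_prop)) measurable_const
    have mO1 : Measurable fun r : ℝ =>
        (ℙ {ω | Real.log (1 + P k * H k ω * G k r / (N₀ + I k r ω / PG)) < τ}).toReal :=
      (measurable_measure_prodMk_left (ν := (ℙ : Measure Ω)) mO).ennreal_toReal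
    have mEp : StronglyMeasurable fun r : ℝ => ∫ ω, Vp k (H k ω) τ r := by
      have : Measurable fun x : ℝ × Ω => Vp k (H k x.2) τ x.1 :=
        mVp.comp (measurable_fst.prodMk (m3.comp measurable_snd))
      exact this.stronglyMeasurable.integral_prod_right'
    have mEm : StronglyMeasurable fun r : ℝ => ∫ ω, Vm k (H k ω) τ r := by
      have : Measurable fun x : ℝ × Ω => Vm k (H k x.2) τ x.1 :=
        mVm.comp (measurable_fst.prodMk (m3.comp measurable_snd))
      exact this.stronglyMeasurable.integral_prod_right'
    -- pointwise bounds
    have pt : ∀ r : ℝ, 0 ≤ r →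
        (∫ ω, Vm k (H k ω) τ r ≤ 1 - (ℙ {ω | Real.log (1 + P k * H k ω * G k r / (N₀ + I k r ω / PG)) < τ}).toReal ∧
        1 - (ℙ {ω | Real.log (1 + P k * H k ω * G k r / (N₀ + I k r ω / PG)) < τ}).toReal
          ≤ ∫ ω, Vp k (H k ω) τ r) ∧ 0 ≤ ∫ ω, Vm k (H k ω) τ r ∧ ∫ ω, Vp k (H k ω) τ r ≤ 1 := by
      intro r hr
      have hVm0 : ∀ h, 0 ≤ Vm k h τ r := by
        intro h; rw [hVm]; split_ifs
        · exact le_max_left _ _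
        · exact le_rfl
      have hVp1 : ∀ h, Vp k h τ r ≤ 1 := by
        intro h; rw [hVp]; split_ifs
        · exact min_le_left _ _
        · exact zero_le_one
      have mIr : Measurable (I k r) := m4.comp measurable_prodMk_left
      have mζr : Measurable fun h => ζ k h τ r := mζ.comp (measurable_const.prodMk measurable_id)
      have mVpr : Measurable fun h => Vp k h τ r :=
        mVp.comp (measurable_const.prodMk measurable_id)
      have mVmr : Measurable fun h => Vm k h τ r :=
        mVm.comp (measurable_const.prodMk measurable_id)
      have hT : MeasurableSet {x : ℝ × ℝ | (x.2 - μ k r) / σ k r ≤ ζ k x.1 τ r ∧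
          (Real.exp τ - 1) * N₀ / (P k * G k r) ≤ x.1} :=
        (measurableSet_le (by fun_prop) (mζr.comp measurable_fst)).inter
          (measurableSet_le measurable_const measurable_fst)
      have hlu : ∀ h, Vm k h τ r ≤ (ℙ : Measure Ω).real {ω | (h, I k r ω) ∈
          {x : ℝ × ℝ | (x.2 - μ k r) / σ k r ≤ ζ k x.1 τ r ∧
          (Real.exp τ - 1) * N₀ / (P k * G k r) ≤ x.1}} ∧
          (ℙ : Measure Ω).real {ω | (h, I k r ω) ∈
          {x : ℝ × ℝ | (x.2 - μ k r) / σ k r ≤ ζ k x.1 τ r ∧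
          (Real.exp τ - 1) * N₀ / (P k * G k r) ≤ x.1}} ≤ Vp k h τ r := by
        intro h
        rw [hVm, hVp]
        by_cases hh : (Real.exp τ - 1) * N₀ / (P k * G k r) ≤ h
        · simp only [Set.mem_ofPred_eq, hh, and_true, if_true]
          have := abs_le.1 (hGauss k r hr (ζ k h τ r))
          rw [← measureReal_def] at this
          exact ⟨max_le measureReal_nonneg (by linarith [this.1]),
            le_min measureReal_le_one (by linarith [this.2])⟩
        · simp [hh]
      have core := barss_core ℙ (H k) (I k r) m3 mIr (hindep k r hr) _ hT
        (fun h => Vm k h τ r) (fun h => Vp k h τ r) mVmr mVpr hVm0 hVp1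
        (fun h => (hlu h).1) (fun h => (hlu h).2)
      have mOr : MeasurableSet {ω | Real.log (1 + P k * H k ω * G k r / (N₀ + I k r ω / PG)) < τ} :=
        measurable_prodMk_left (x := r) mO
      have hq : (ℙ : Measure Ω).real {ω | (H k ω, I k r ω) ∈
          {x : ℝ × ℝ | (x.2 - μ k r) / σ k r ≤ ζ k x.1 τ r ∧
          (Real.exp τ - 1) * N₀ / (P k * G k r) ≤ x.1}} =
          1 - (ℙ {ω | Real.log (1 + P k * H k ω * G k r / (N₀ + I k r ω / PG)) < τ}).toReal := by
        rw [← measureReal_def, ← probReal_compl_eq_one_sub mOr]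
        refine measureReal_congr ?_
        filter_upwards [hpos k r hr] with ω hω
        refine propext ?_
        have := barss_iff (m := μ k r) (hP k) (hHnn k ω) (hGpos k r hr) (hInn k r hr ω) hPG hτ
          (hσpos k r hr) hω
        rw [← hζ] at this
        exact this.symm
      rw [hq] at core
      refine ⟨core, integral_nonneg fun ω => hVm0 _, ?_⟩
      have : ∫ ω, Vp k (H k ω) τ r ≤ ∫ ω : Ω, (1 : ℝ) := by
        refine integral_mono ?_ (integrable_const _) fun ω => hVp1 _
        refine Integrable.of_bound (mVpr.comp m3).aestronglyMeasurable 1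
          (Filter.Eventually.of_forall fun ω => ?_)
        show ‖Vp k (H k ω) τ r‖ ≤ 1
        rw [Real.norm_eq_abs, abs_of_nonneg (measureReal_nonneg.trans (hlu _).2)]
        exact hVp1 _
      simpa using this
    have fi : IntegrableOn (f k) (Set.Ici 0) := by
      by_contra hc
      have := integral_undef hc
      rw [hfint k] at this
      exact one_ne_zero this
    have ib : ∀ g : ℝ → ℝ, StronglyMeasurable g → (∀ r, 0 ≤ r → 0 ≤ g r ∧ g r ≤ 1) →
        IntegrableOn (fun r => f k r * g r) (Set.Ici 0) := by
      intro g hg hb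
      refine Integrable.mono fi (m2.stronglyMeasurable.mul hg).aestronglyMeasurable ?_
      refine (ae_restrict_iff' measurableSet_Ici).2 (Filter.Eventually.of_forall fun r hr => ?_)
      rw [norm_mul]
      refine mul_le_of_le_one_right (norm_nonneg _) ?_
      rw [Real.norm_eq_abs, abs_of_nonneg (hb r hr).1]
      exact (hb r hr).2
    have hO01 : ∀ r : ℝ, 0 ≤ (ℙ {ω | Real.log (1 + P k * H k ω * G k r / (N₀ + I k r ω / PG)) < τ}).toReal ∧ (ℙ {ω | Real.log (1 + P k * H k ω * G k r / (N₀ + I k r ω / PG)) < τ}).toReal ≤ 1 :=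
      fun r => ⟨ENNReal.toReal_nonneg, measureReal_le_one⟩
    have iO := ib _ mO1.stronglyMeasurable (fun r _ => hO01 r)
    have iP := ib _ mEp (fun r hr => by
      have := pt r hr
      have := hO01 r
      constructor <;> linarith)
    have iM := ib _ mEm (fun r hr => by
      have := pt r hr
      have := hO01 r
      constructor <;> linarith)
    have cm : ∀ r : ℝ, (ℙ {ω | Real.log (1 + P k * H k ω * G k r / (N₀ + I k r ω / PG)) < τ}).toReal * f k r = f k r * (ℙ {ω | Real.log (1 + P k * H k ω * G k r / (N₀ + I k r ω / PG)) < τ}).toReal :=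
      fun r => mul_comm _ _
    simp only [cm]
    have eP := integral_sub fi iP
    have eM := integral_sub fi iM
    rw [hfint k] at eP eM
    rw [← eP, ← eM]
    constructor
    · refine setIntegral_mono_on (fi.sub iP) iO measurableSet_Ici fun r hr => ?_
      have h1 := (pt r hr).1.2
      have h2 := hfnn k r
      have := mul_le_mul_of_nonneg_left h1 h2
      linarith
    · refine setIntegral_mono_on iO (fi.sub iM) measurableSet_Ici fun r hr => ?_
      have h1 := (pt r hr).1.1
      have h2 := hfnn k r
      have := mul_le_mul_of_nonneg_left h1 h2
      linarith
  have hs : ∀ A : Fin K → ℝ, 1 - ∑ k, pstar k * A k = ∑ k, pstar k * (1 - A k) := by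
    intro A
    simp only [mul_sub, mul_one, Finset.sum_sub_distrib, hpsum]
  constructor
  · rw [hs]
    refine Finset.sum_le_sum fun k _ => ?_
    exact mul_le_mul_of_nonneg_left (main k).1 (hpstar k)
  · rw [hs]
    refine Finset.sum_le_sum fun k _ => ?_
    exact mul_le_mul_of_nonneg_left (main k).2 (hpstar k)
end
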